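/- arXiv:1801.04701 — 9 statements merged into one kernel-verified Lean document; each statement's English description precedes it below -/
import Mathlib

section
/- Fix a scoring function f, a finite set of m positive instances x_1^+,...,x_m^+ and n negative instances x_1^-,...,x_n^- (n ≥ 1), and a tolerance τ with 0 ≤ τ < 1. Let k = ⌊τn⌋ + 1 and let f(x_[k]^-) denote the k-th largest value among f(x_1^-),...,f(x_n^-). Then the infimum, over all thresholds b ∈ ℝ satisfying (1/n)·Σ_{j=1}^n 𝟙(f(x_j^-) > b) ≤ τ, of the empirical false-negative rate (1/m)·Σ_{i=1}^m 𝟙(f(x_i^+) ≤ b) is attained at b = f(x_[k]^-) and equals (1/m)·Σ_{i=1}^m 𝟙(f(x_i^+) − f(x_[k]^-) ≤ 0). Consequently, for any hypothesis set H of scoring functions, the constrained empirical problem min over f∈H and feasible b of (1/m)·Σ_{i=1}^m 𝟙(f(x_i^+) ≤ b) has the same optimal value as the ranking problem min over f∈H of (1/m)·Σ_{i=1}^m 𝟙(f(x_i^+) − f(x_[k]^-) ≤ 0). -/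
/-!
The number of negatives scoring above `b` is at most `k - 1 = ⌊τ n⌋` exactly when the `k`-th largest
negative score is at most `b`. Hence the feasible thresholds for `g` form the closed half-line
`[g(x_[k]^-), ∞)` (`feasible_iff`, resting on the sorted-list count `getElem_le_iff_countP_le`).
The false-negative rate is monotone in the threshold, so it is minimized at the left endpoint,
where it is the ranking objective. For the optimal values over `H`, each value of either problem is
then dominated by one of the other.
-/

/-- The `k`-th largest value among `v 1, ..., v n` (1-indexed `k`). -/
noncomputable def kthLargest {n : ℕ} (v : Fin n → ℝ) (k : ℕ) : ℝ :=
  ((List.ofFn v).insertionSort (· ≥ ·)).getD (k - 1) 0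

open Classical in
/-- Real-valued indicator of a proposition. -/
noncomputable def ind (P : Prop) : ℝ := if P then 1 else 0

/-- In a non-increasing list, the entry at (0-based) position `i` is at most `b` iff at most `i`
entries exceed `b`. -/
lemma getElem_le_iff_countP_le (b : ℝ) (l : List ℝ) (hl : l.Pairwise (· ≥ ·)) (i : ℕ)
    (hi : i < l.length) : l[i] ≤ b ↔ l.countP (fun x => decide (b < x)) ≤ i := by
  induction l generalizing i with
  | nil => simp at hi
  | cons a l ih =>
    rw [List.pairwise_cons] at hl
    obtain ⟨ha, hl⟩ := hl
    by_cases hab : a ≤ b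
    · -- When the head is at most `b`, so is every entry, and both sides hold.
      have hall : ∀ x ∈ a :: l, x ≤ b := by
        intro x hx
        rcases List.mem_cons.1 hx with rfl | hx
        · exact hab
        · exact (ha x hx).trans hab
      have hcount : (a :: l).countP (fun x => decide (b < x)) = 0 := by
        rw [List.countP_eq_zero]
        intro x hx
        simpa using hall x hx
      exact ⟨fun _ => by omega, fun _ => hall _ (List.getElem_mem hi)⟩
    · have hcount : (a :: l).countP (fun x => decide (b < x))
          = l.countP (fun x => decide (b < x)) + 1 := by
        rw [List.countP_cons_of_pos]
        simpa using hab
      rw [hcount]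
      cases i with
      | zero => simpa using hab
      | succ i =>
        have := ih hl i (by simpa using hi)
        simpa using this

lemma sum_map_ind_eq_countP (b : ℝ) (l : List ℝ) :
    (l.map (fun x => ind (b < x))).sum = (l.countP (fun x => decide (b < x)) : ℝ) := by
  induction l with
  | nil => simp
  | cons a l ih =>
    rw [List.map_cons, List.sum_cons, ih, List.countP_cons]
    by_cases h : b < a <;> simp [ind, h, add_comm]

lemma sum_ind_eq_countP {n : ℕ} (v : Fin n → ℝ) (b : ℝ) :
    ∑ j, ind (b < v j) = ((List.ofFn v).countP (fun x => decide (b < x)) : ℝ) := by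
  rw [← sum_map_ind_eq_countP, List.map_ofFn, List.sum_ofFn]
  rfl

/-- With `k = i + 1`: at most `k - 1` of the values exceed `b` iff the `k`-th largest value is at most `b`.
The bound `i < n` keeps `kthLargest` away from its default value. -/
lemma kthLargest_succ_le_iff {n : ℕ} (v : Fin n → ℝ) (i : ℕ) (hi : i < n) (b : ℝ) :
    kthLargest v (i + 1) ≤ b ↔ ∑ j, ind (b < v j) ≤ (i : ℝ) := by
  have hperm := List.perm_insertionSort (· ≥ ·) (List.ofFn v)
  have hlen : i < ((List.ofFn v).insertionSort (· ≥ ·)).length := by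
    simpa [hperm.length_eq] using hi
  rw [sum_ind_eq_countP, Nat.cast_le, ← hperm.countP_eq,
    ← getElem_le_iff_countP_le b _ (List.pairwise_insertionSort _ _) i hlen, kthLargest,
    Nat.add_sub_cancel, List.getD_eq_getElem _ _ hlen]

/-- The false-positive constraint at level `τ` says that the threshold is at least the
`(⌊τ n⌋ + 1)`-th largest negative score. -/
lemma feasible_iff {n : ℕ} (hn : 1 ≤ n) {τ : ℝ} (hτ0 : 0 ≤ τ) (hτ1 : τ < 1)
    (v : Fin n → ℝ) (b : ℝ) :
    (1 / (n : ℝ)) * ∑ j, ind (b < v j) ≤ τ ↔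
      kthLargest v ((⌊τ * (n : ℝ)⌋).toNat + 1) ≤ b := by
  have hn0 : (0 : ℝ) < n := by exact_mod_cast hn
  have hnonneg : 0 ≤ τ * (n : ℝ) := by positivity
  have hlt : ⌊τ * (n : ℝ)⌋₊ < n := (Nat.floor_lt hnonneg).2 (by nlinarith)
  rw [Int.floor_toNat, kthLargest_succ_le_iff v _ hlt b, one_div_mul_eq_div, div_le_iff₀ hn0]
  -- The number of exceedances is an integer, so comparing with `τ n` or its floor is the same.
  rw [sum_ind_eq_countP, Nat.cast_le, Nat.le_floor_iff hnonneg]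

lemma ind_mono {P Q : Prop} (h : P → Q) : ind P ≤ ind Q := by
  unfold ind
  split_ifs <;> simp_all

lemma ind_nonneg (P : Prop) : 0 ≤ ind P := by
  unfold ind
  split_ifs <;> simp

/-- the constrained empirical problem and the ranking problem.
The infimum over feasible thresholds of the empirical false-negative rate is attained at
`b = f(x_[k]^-)` and equals the ranking objective; consequently for any hypothesis set `H`
the two problems have the same optimal value. -/
theorem tau_fpl_constrained_eq_ranking
    {α : Type*} (m n : ℕ) (hn : 1 ≤ n) (τ : ℝ) (hτ0 : 0 ≤ τ) (hτ1 : τ < 1)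
    (k : ℕ) (hk : k = (⌊τ * (n : ℝ)⌋).toNat + 1)
    (xp : Fin m → α) (xn : Fin n → α)
    (FNR : (α → ℝ) → ℝ → ℝ)
    (hFNR : ∀ g b, FNR g b = (1 / (m : ℝ)) * ∑ i, ind (g (xp i) ≤ b))
    (Feas : (α → ℝ) → ℝ → Prop)
    (hFeas : ∀ g b, Feas g b ↔ (1 / (n : ℝ)) * ∑ j, ind (b < g (xn j)) ≤ τ)
    (rank : (α → ℝ) → ℝ)
    (hrank : ∀ g, rank g =
      (1 / (m : ℝ)) * ∑ i, ind (g (xp i) - kthLargest (fun j => g (xn j)) k ≤ 0))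
    (f : α → ℝ) :
    (Feas f (kthLargest (fun j => f (xn j)) k) ∧
      FNR f (kthLargest (fun j => f (xn j)) k) = rank f ∧
      (∀ b : ℝ, Feas f b → rank f ≤ FNR f b)) ∧
    (∀ H : Set (α → ℝ),
      sInf {v : ℝ | ∃ g ∈ H, ∃ b : ℝ, Feas g b ∧ v = FNR g b} =
        sInf {v : ℝ | ∃ g ∈ H, v = rank g}) := by
  have hfeas : ∀ g b, Feas g b ↔ kthLargest (fun j => g (xn j)) k ≤ b := by
    intro g b
    rw [hFeas, hk]
    exact feasible_iff hn hτ0 hτ1 (fun j => g (xn j)) b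
  have hattain : ∀ g, FNR g (kthLargest (fun j => g (xn j)) k) = rank g := by
    intro g
    simp only [hFNR, hrank, sub_nonpos]
  have hle : ∀ g b, Feas g b → rank g ≤ FNR g b := by
    intro g b hb
    rw [← hattain, hFNR, hFNR]
    refine mul_le_mul_of_nonneg_left (Finset.sum_le_sum fun i _ => ind_mono fun h => ?_)
      (by positivity)
    exact h.trans ((hfeas g b).1 hb)
  have hself : ∀ g, Feas g (kthLargest (fun j => g (xn j)) k) := fun g => (hfeas g _).2 le_rfl
  refine ⟨⟨hself f, hattain f, hle f⟩, fun H => ?_⟩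
  -- For empty `H` both value sets are empty, and `sInf ∅` agrees on the two sides.
  rcases H.eq_empty_or_nonempty with rfl | ⟨g₀, hg₀⟩
  · simp
  have hrank_nonneg : ∀ g, 0 ≤ rank g := by
    intro g
    rw [hrank]
    exact mul_nonneg (by positivity) (Finset.sum_nonneg fun i _ => ind_nonneg _)
  apply le_antisymm
  · refine le_csInf ⟨rank g₀, g₀, hg₀, rfl⟩ ?_
    rintro v ⟨g, hg, rfl⟩
    refine csInf_le ⟨0, ?_⟩ ⟨g, hg, _, hself g, (hattain g).symm⟩
    rintro w ⟨g', _, b, hb, rfl⟩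
    exact (hrank_nonneg g').trans (hle g' b hb)
  · refine le_csInf ⟨_, g₀, hg₀, _, hself g₀, rfl⟩ ?_
    rintro v ⟨g, hg, b, hb, rfl⟩
    refine le_trans (csInf_le ⟨0, ?_⟩ ⟨g, hg, rfl⟩) (hle g b hb)
    rintro w ⟨g', _, rfl⟩
    exact hrank_nonneg g'
end

section
/- Fix a scoring function f, m positive instances x_1^+,...,x_m^+, n negative instances x_1^-,...,x_n^- (n ≥ 1), a tolerance τ with 0 ≤ τ < 1, and set k = ⌊τn⌋ + 1. Let L be any surrogate function of 𝟙(u ≤ 0). Then (1/m)·Σ_{i=1}^m 𝟙( f(x_i^+) − f(x_[k]^-) ≤ 0 ) ≤ (1/m)·Σ_{i=1}^m L( f(x_i^+) − (1/k)·Σ_{j=1}^k f(x_[j]^-) ), where f(x_[j]^-) denotes the j-th largest value among f(x_1^-),...,f(x_n^-). -/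
/-- Within the range of valid ranks, a larger rank gives a smaller value. The bound `k ≤ n` matters:
beyond rank `n` the value defaults to `0`. -/
theorem kthLargest_anti {n : ℕ} (v : Fin n → ℝ) {j k : ℕ} (hj : 1 ≤ j) (hjk : j ≤ k)
    (hkn : k ≤ n) : kthLargest v k ≤ kthLargest v j := by
  have hlen : ((List.ofFn v).insertionSort (· ≥ ·)).length = n := by
    rw [List.length_insertionSort, List.length_ofFn]
  have hk' : k - 1 < ((List.ofFn v).insertionSort (· ≥ ·)).length := by omega
  have hj' : j - 1 < ((List.ofFn v).insertionSort (· ≥ ·)).length := by omega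
  unfold kthLargest
  rw [List.getD_eq_getElem _ _ hk', List.getD_eq_getElem _ _ hj']
  rcases Nat.lt_or_ge (j - 1) (k - 1) with h | h
  · exact List.pairwise_iff_getElem.mp (List.pairwise_insertionSort (· ≥ ·) (List.ofFn v))
      (j - 1) (k - 1) hj' hk' h
  · obtain rfl : j = k := by omega
    exact le_rfl

theorem kthLargest_le_mean {n : ℕ} (v : Fin n → ℝ) {k : ℕ} (hk : 1 ≤ k) (hkn : k ≤ n) :
    kthLargest v k ≤ (1 / (k : ℝ)) * ∑ j ∈ Finset.range k, kthLargest v (j + 1) := by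
  have hk0 : (0 : ℝ) < k := by exact_mod_cast hk
  have hsum : (k : ℝ) * kthLargest v k ≤ ∑ j ∈ Finset.range k, kthLargest v (j + 1) := by
    have h := Finset.card_nsmul_le_sum (Finset.range k) (fun j => kthLargest v (j + 1))
      (kthLargest v k) fun j hj =>
        kthLargest_anti v (Nat.le_add_left 1 j) (Finset.mem_range.mp hj) hkn
    simpa [nsmul_eq_mul] using h
  rw [one_div, inv_mul_eq_div, le_div_iff₀ hk0, mul_comm]
  exact hsum

/-- the 0-1 ranking risk w.r.t. the `k`-th largest negative score is upper
bounded by the surrogate risk w.r.t. the mean of the `k` largest negative scores. -/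
theorem indicator_rank_risk_le_surrogate_mean_risk
    {α : Type*} (m n : ℕ) (hn : 1 ≤ n) (f : α → ℝ)
    (xp : Fin m → α) (xn : Fin n → α)
    (τ : ℝ) (hτ0 : 0 ≤ τ) (hτ1 : τ < 1)
    (k : ℕ) (hk : k = (⌊τ * (n : ℝ)⌋).toNat + 1)
    (L : ℝ → ℝ) (hL_cont : Continuous L) (hL_anti : Antitone L)
    (hL_nonpos : ∀ u ≤ 0, L 0 ≤ L u) (hL0 : 1 ≤ L 0)
    (hL_pos : ∀ u > 0, 0 ≤ L u ∧ L u < L 0)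
    (hL_lim : Filter.Tendsto L Filter.atTop (nhds 0)) :
    (1 / (m : ℝ)) * ∑ i, ind (f (xp i) - kthLargest (fun j => f (xn j)) k ≤ 0) ≤
      (1 / (m : ℝ)) * ∑ i, L (f (xp i) -
        (1 / (k : ℝ)) * ∑ j ∈ Finset.range k, kthLargest (fun t => f (xn t)) (j + 1)) := by
  have hkn : k ≤ n := by
    have hn0 : (0 : ℝ) < n := by exact_mod_cast hn
    have hfloor : ⌊τ * (n : ℝ)⌋ < (n : ℤ) := by
      rw [Int.floor_lt]
      push_cast
      nlinarith
    omega
  have hmean := kthLargest_le_mean (fun t => f (xn t)) (by omega : 1 ≤ k) hkn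
  have hL_nonneg : ∀ u, 0 ≤ L u := fun u => by
    rcases le_or_gt u 0 with hu | hu
    · linarith [hL_nonpos u hu]
    · exact (hL_pos u hu).1
  refine mul_le_mul_of_nonneg_left (Finset.sum_le_sum fun i _ => ?_) (by positivity)
  unfold ind
  split_ifs with h
  · exact hL0.trans (hL_nonpos _ (by linarith))
  · exact hL_nonneg _
end

section
/- Fix a scoring function f, m positive instances x_1^+,...,x_m^+, n negative instances x_1^-,...,x_n^- (n ≥ 1), a tolerance τ with 0 ≤ τ < 1, and set k = ⌊τn⌋ + 1. Let L be a convex surrogate function of 𝟙(u ≤ 0). Then for every b ∈ ℝ satisfying (1/n)·Σ_{j=1}^n L(b − f(x_j^-)) ≤ τ, it holds that (1/m)·Σ_{i=1}^m L( f(x_i^+) − (1/k)·Σ_{j=1}^k f(x_[j]^-) ) ≤ (1/m)·Σ_{i=1}^m L( f(x_i^+) − b ), where f(x_[j]^-) denotes the j-th largest value among f(x_1^-),...,f(x_n^-). -/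
lemma sum_range_getD_le_sum_map (g : ℝ → ℝ) (hg : ∀ x, 0 ≤ g x) (l : List ℝ) :
    ∀ k ≤ l.length, ∑ j ∈ Finset.range k, g (l.getD j 0) ≤ (l.map g).sum := by
  induction l with
  | nil =>
    intro k hk
    have : k = 0 := by simpa using hk
    simp [this]
  | cons a l ih =>
    intro k hk
    cases k with
    | zero =>
      simp only [Finset.range_zero, Finset.sum_empty]
      apply List.sum_nonneg
      intro x hx
      obtain ⟨y, -, rfl⟩ := List.mem_map.1 hx
      exact hg y
    | succ k =>
      rw [Finset.sum_range_succ']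
      have := ih k (by simpa using hk)
      simp only [List.getD_cons_succ, List.getD_cons_zero, List.map_cons, List.sum_cons]
      linarith

lemma sum_kthLargest_le {n : ℕ} (v : Fin n → ℝ) (g : ℝ → ℝ) (hg : ∀ x, 0 ≤ g x)
    (k : ℕ) (hk : k ≤ n) :
    ∑ j ∈ Finset.range k, g (kthLargest v (j + 1)) ≤ ∑ i, g (v i) := by
  have h := sum_range_getD_le_sum_map g hg ((List.ofFn v).insertionSort (· ≥ ·)) k
    (by simpa using hk)
  have hp := (((List.perm_insertionSort (· ≥ ·) (List.ofFn v)).map g).sum_eq)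
  rw [hp, List.map_ofFn, List.sum_ofFn] at h
  simpa [kthLargest] using h

/-- `R̄₁ ≤ R̄₂` — the surrogate risk w.r.t. the mean of the top-`k` negative
scores lower bounds the surrogate risk at any threshold `b` feasible for the surrogate
false-positive constraint. -/
theorem surrogate_mean_risk_le_constrained_surrogate_risk
    {α : Type*} (m n : ℕ) (hn : 1 ≤ n) (f : α → ℝ)
    (xp : Fin m → α) (xn : Fin n → α)
    (τ : ℝ) (hτ0 : 0 ≤ τ) (hτ1 : τ < 1)
    (k : ℕ) (hk : k = (⌊τ * (n : ℝ)⌋).toNat + 1)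
    (L : ℝ → ℝ) (hL_conv : ConvexOn ℝ Set.univ L)
    (hL_cont : Continuous L) (hL_anti : Antitone L)
    (hL_nonpos : ∀ u ≤ 0, L 0 ≤ L u) (hL0 : 1 ≤ L 0)
    (hL_pos : ∀ u > 0, 0 ≤ L u ∧ L u < L 0)
    (hL_lim : Filter.Tendsto L Filter.atTop (nhds 0))
    (b : ℝ) (hb : (1 / (n : ℝ)) * ∑ j, L (b - f (xn j)) ≤ τ) :
    (1 / (m : ℝ)) * ∑ i, L (f (xp i) -
        (1 / (k : ℝ)) * ∑ j ∈ Finset.range k, kthLargest (fun t => f (xn t)) (j + 1)) ≤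
      (1 / (m : ℝ)) * ∑ i, L (f (xp i) - b) := by
  have hn0 : (0 : ℝ) < n := by exact_mod_cast hn
  have hτn : 0 ≤ τ * (n : ℝ) := by positivity
  have hL_nonneg : ∀ u, 0 ≤ L u := by
    intro u
    rcases le_or_gt u 0 with h | h
    · linarith [hL_nonpos u h]
    · exact (hL_pos u h).1
  have hk_nat : k = ⌊τ * (n : ℝ)⌋₊ + 1 := by rw [hk, Int.floor_toNat]
  have hk_gt : τ * n < k := by
    rw [hk_nat]
    push_cast
    exact Nat.lt_floor_add_one _
  have hkn : k ≤ n := by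
    have : ⌊τ * (n : ℝ)⌋₊ < n := (Nat.floor_lt hτn).2 (by nlinarith)
    omega
  have hk0 : (0 : ℝ) < k := lt_of_le_of_lt hτn hk_gt
  have hsum := sum_kthLargest_le (fun t => f (xn t)) (fun z => L (b - z))
    (fun _ => hL_nonneg _) k hkn
  have hall : ∑ j, L (b - f (xn j)) ≤ τ * n := by
    rwa [one_div, inv_mul_le_iff₀ hn0, mul_comm] at hb
  set z : ℕ → ℝ := fun j => kthLargest (fun t => f (xn t)) (j + 1) with hz
  have hM : (1 / (k : ℝ)) * ∑ j ∈ Finset.range k, z j ≤ b := by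
    by_contra! hlt
    have hJ := hL_conv.map_sum_le (t := Finset.range k) (w := fun _ => 1 / (k : ℝ))
      (p := fun j => b - z j) (fun _ _ => by positivity)
      (by simp [hk0.ne']) (fun _ _ => Set.mem_univ _)
    simp only [smul_eq_mul, ← Finset.mul_sum, Finset.sum_sub_distrib, Finset.sum_const,
      Finset.card_range, nsmul_eq_mul] at hJ
    have hmean : 1 / (k : ℝ) * (k * b - ∑ j ∈ Finset.range k, z j)
        = b - 1 / (k : ℝ) * ∑ j ∈ Finset.range k, z j := by
      field_simp
    rw [hmean] at hJ
    have h1 : 1 / (k : ℝ) * ∑ j ∈ Finset.range k, L (b - z j) < 1 := by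
      rw [one_div, inv_mul_lt_iff₀ hk0, mul_one]
      exact (hsum.trans hall).trans_lt hk_gt
    linarith [hL_nonpos (b - 1 / (k : ℝ) * ∑ j ∈ Finset.range k, z j) (by linarith)]
  apply mul_le_mul_of_nonneg_left _ (by positivity)
  exact Finset.sum_le_sum fun i _ => hL_anti (by linarith)
end

section
/- Let L be a convex surrogate function of 𝟙(u ≤ 0), let v_1,...,v_n be real numbers (n ≥ 1), let τ satisfy 0 ≤ τ < 1, and set k = ⌊τn⌋ + 1. If b ∈ ℝ satisfies Σ_{j=1}^n L(b − v_j) ≤ τn, then b > (1/k)·Σ_{j=1}^k v_[j], where v_[j] denotes the j-th largest value among v_1,...,v_n. -/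
/-- Sorting permutes the values, so summing over the sorted values is summing over all of them. -/
lemma sum_kthLargest {n : ℕ} (v : Fin n → ℝ) (f : ℝ → ℝ) :
    ∑ j ∈ Finset.range n, f (kthLargest v (j + 1)) = ∑ j, f (v j) := by
  set l := (List.ofFn v).insertionSort (· ≥ ·) with hl
  have hlen : l.length = n := by simp [hl]
  have hperm : l.Perm (List.ofFn v) := List.perm_insertionSort _ _
  calc ∑ j ∈ Finset.range n, f (kthLargest v (j + 1))
      = ∑ j ∈ Finset.range l.length, f (l.getD j 0) := by
        rw [hlen]; simp [kthLargest, hl]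
    _ = ∑ i : Fin l.length, f l[i.1] := by
        rw [Finset.sum_range]
        exact Finset.sum_congr rfl fun i _ => by rw [List.getD_eq_getElem _ _ i.2]
    _ = (l.map f).sum := Fin.sum_univ_fun_getElem l f
    _ = ((List.ofFn v).map f).sum := (hperm.map f).sum_eq
    _ = ∑ j, f (v j) := by rw [List.map_ofFn, List.sum_ofFn]; rfl

/-- if `Σ_j L(b − v_j) ≤ τn` for a convex surrogate `L`, then `b` exceeds the
mean of the `k = ⌊τn⌋ + 1` largest values among the `v_j`. -/
theorem feasible_threshold_gt_topk_mean
    (n : ℕ) (hn : 1 ≤ n) (v : Fin n → ℝ)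
    (τ : ℝ) (hτ0 : 0 ≤ τ) (hτ1 : τ < 1)
    (k : ℕ) (hk : k = (⌊τ * (n : ℝ)⌋).toNat + 1)
    (L : ℝ → ℝ) (hL_conv : ConvexOn ℝ Set.univ L)
    (hL_cont : Continuous L) (hL_anti : Antitone L)
    (hL_nonpos : ∀ u ≤ 0, L 0 ≤ L u) (hL0 : 1 ≤ L 0)
    (hL_pos : ∀ u > 0, 0 ≤ L u ∧ L u < L 0)
    (hL_lim : Filter.Tendsto L Filter.atTop (nhds 0))
    (b : ℝ) (hb : ∑ j, L (b - v j) ≤ τ * n) :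
    (1 / (k : ℝ)) * ∑ j ∈ Finset.range k, kthLargest v (j + 1) < b := by
  have hk0 : (0 : ℝ) < k := by rw [hk]; positivity
  have hτn : 0 ≤ τ * (n : ℝ) := by positivity
  have hn' : (0 : ℝ) < n := by exact_mod_cast hn
  have hfloor : ((⌊τ * (n : ℝ)⌋).toNat : ℝ) = (⌊τ * (n : ℝ)⌋ : ℝ) := by
    exact_mod_cast Int.toNat_of_nonneg (Int.floor_nonneg.mpr hτn)
  have hkτ : τ * n < k := by
    rw [hk]; push_cast; rw [hfloor]; exact Int.lt_floor_add_one _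
  have hkn : k ≤ n := by
    have h1 : ((⌊τ * (n : ℝ)⌋).toNat : ℝ) < n := by
      rw [hfloor]
      exact (Int.floor_le _).trans_lt (by nlinarith)
    have h2 : (⌊τ * (n : ℝ)⌋).toNat < n := by exact_mod_cast h1
    omega
  have hLnn : ∀ u, 0 ≤ L u := fun u => by
    rcases le_or_gt u 0 with hu | hu
    · linarith [hL_nonpos u hu]
    · exact (hL_pos u hu).1
  by_contra! hcon
  have hjensen := hL_conv.map_sum_le (t := Finset.range k) (w := fun _ => 1 / (k : ℝ))
    (p := fun j => b - kthLargest v (j + 1)) (fun _ _ => by positivity)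
    (by simp [hk0.ne']) (fun _ _ => Set.mem_univ _)
  simp only [smul_eq_mul, ← Finset.mul_sum, Finset.sum_sub_distrib, Finset.sum_const,
    Finset.card_range, nsmul_eq_mul] at hjensen
  have harg : 1 / (k : ℝ) * (k * b - ∑ j ∈ Finset.range k, kthLargest v (j + 1)) ≤ 0 := by
    have : 1 / (k : ℝ) * (k * b) = b := by field_simp
    rw [mul_sub, this]; linarith
  have hone := (hL0.trans (hL_nonpos _ harg)).trans hjensen
  have hksum : (k : ℝ) ≤ ∑ j ∈ Finset.range k, L (b - kthLargest v (j + 1)) := by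
    rw [one_div, ← div_eq_inv_mul, le_div_iff₀ hk0] at hone
    linarith
  have hsub : ∑ j ∈ Finset.range k, L (b - kthLargest v (j + 1)) ≤
      ∑ j ∈ Finset.range n, L (b - kthLargest v (j + 1)) :=
    Finset.sum_le_sum_of_subset_of_nonneg (Finset.range_mono hkn) (fun _ _ _ => hLnn _)
  rw [sum_kthLargest v (fun x => L (b - x))] at hsub
  linarith
end

section
/- Let α⁰ ∈ ℝ^m, β⁰ ∈ ℝ^n, and let k be an integer with 1 ≤ k ≤ n. Consider the projection problem: minimize ½‖α − α⁰‖² + ½‖β − β⁰‖² over α ∈ ℝ^m, β ∈ ℝ^n subject to α ≥ 0, β ≥ 0, Σ_{i=1}^m α_i = Σ_{j=1}^n β_j, and β_j ≤ (1/k)·Σ_{i=1}^m α_i for every j. Then a feasible pair (α*, β*) is an optimal solution of this problem if and only if there exist C* ≥ 0 and λ*, μ* ∈ ℝ satisfying the system: (a) C* = Σ_{i=1}^m [α_i⁰ − λ*]_+; (b) C* = Σ_{j=1}^n min{[β_j⁰ − μ*]_+, C*/k}; (c) 0 = λ* + μ* + (1/k)·Σ_{j=1}^n [β_j⁰ − μ*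 − C*/k]_+; together with the closed forms α_i* = [α_i⁰ − λ*]_+ for every i and β_j* = min{[β_j⁰ − μ*]_+, C*/k} for every j. -/
/-!
The feasible set is a convex cone, so `(α*, β*)` is optimal iff the residual
`(a, b) = (α⁰ - α*, β⁰ - β*)` satisfies `⟨a, α⟩ + ⟨b, β⟩ ≤ 0` on the cone, with equality at
`(α*, β*)`.

*Necessity.* Let `S` be a set of `k` largest entries of `b` and `μ` the smallest of these
(`exists_topk`); then `μ + (1/k) ∑ [b_j - μ]_+ = (1/k) ∑_{j ∈ S} b_j`, and `λ` is defined as minus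
this number. Testing the inequality at `(e_i, 1_S / k)` gives `a_i ≤ λ`. Writing `C = ∑ α*_i`, the
bounds `a_i α*_i ≤ λ α*_i` and `b_j β*_j ≤ μ β*_j + [b_j - μ]_+ C / k` sum to
`⟨a, α*⟩ + ⟨b, β*⟩ ≤ C (λ - λ) = 0`. As the left side is zero, each bound is an equality, and these
complementary slackness relations are the closed forms. The argument covers `C = 0` and `m = 0`.

*Sufficiency.* The closed forms give termwise lower bounds for the increase of the objective
(`alpha_term_bound`, `beta_term_bound`), whose sum vanishes by the third equation of the system.
-/

/-- The feasible set `Γ_k`: nonnegative `(α, β)` with matching sums and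
`β_j ≤ (1/k) Σ_i α_i` for every `j`. -/
def TopkSimplex (m n k : ℕ) (α : Fin m → ℝ) (β : Fin n → ℝ) : Prop :=
  (∀ i, 0 ≤ α i) ∧ (∀ j, 0 ≤ β j) ∧ (∑ i, α i) = (∑ j, β j) ∧
    ∀ j, β j ≤ (1 / (k : ℝ)) * ∑ i, α i

/-- The projection objective `½‖α − α⁰‖² + ½‖β − β⁰‖²`. -/
noncomputable def projObj {m n : ℕ} (α0 : Fin m → ℝ) (β0 : Fin n → ℝ)
    (α : Fin m → ℝ) (β : Fin n → ℝ) : ℝ :=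
  (1 / 2) * (∑ i, (α i - α0 i) ^ 2) + (1 / 2) * (∑ j, (β j - β0 j) ^ 2)

/-- A set of `k` largest entries of `b`, with a threshold separating it from its complement. -/
lemma exists_topk {n k : ℕ} (hk1 : 1 ≤ k) (hkn : k ≤ n) (b : Fin n → ℝ) :
    ∃ (S : Finset (Fin n)) (mu : ℝ), S.card = k ∧ (∀ j ∈ S, mu ≤ b j) ∧ ∀ j ∉ S, b j ≤ mu := by
  have hne : (Finset.powersetCard k (Finset.univ : Finset (Fin n))).Nonempty :=
    Finset.powersetCard_nonempty.2 (by simpa using hkn)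
  obtain ⟨S, hS, hmax⟩ := Finset.exists_max_image _ (fun S => ∑ j ∈ S, b j) hne
  have hcard : S.card = k := (Finset.mem_powersetCard.1 hS).2
  have hSne : S.Nonempty := Finset.card_pos.1 (by omega)
  obtain ⟨i, hi, hmin⟩ := Finset.exists_min_image S b hSne
  refine ⟨S, b i, hcard, hmin, fun j hj => ?_⟩
  -- Exchanging `i` for `j` in `S` cannot increase the sum.
  have hj' : j ∉ S.erase i := fun h => hj (Finset.mem_of_mem_erase h)
  have hc : (insert j (S.erase i)).card = k := by
    rw [Finset.card_insert_of_notMem hj', Finset.card_erase_of_mem hi]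
    omega
  have h := hmax (insert j (S.erase i))
    (Finset.mem_powersetCard.2 ⟨Finset.subset_univ _, hc⟩)
  have h2 := Finset.add_sum_erase S b hi
  simp only [Finset.sum_insert hj'] at h
  linarith

/-- Exact quadratic expansion of the objective along a direction `(x, y)`. -/
lemma projObj_add_smul {m n : ℕ} (α0 : Fin m → ℝ) (β0 : Fin n → ℝ) (α x : Fin m → ℝ)
    (β y : Fin n → ℝ) (t : ℝ) :
    projObj α0 β0 (fun i => α i + t * x i) (fun j => β j + t * y j) =
      projObj α0 β0 α β - t * ((∑ i, (α0 i - α i) * x i) + ∑ j, (β0 j - β j) * y j)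
        + t ^ 2 * ((1 / 2) * ((∑ i, x i ^ 2) + ∑ j, y j ^ 2)) := by
  have h : ∀ {p : ℕ} (u0 u z : Fin p → ℝ), ∑ i, (u i + t * z i - u0 i) ^ 2 =
      ∑ i, (u i - u0 i) ^ 2 - 2 * t * ∑ i, (u0 i - u i) * z i + t ^ 2 * ∑ i, z i ^ 2 := by
    intro p u0 u z
    rw [Finset.mul_sum, Finset.mul_sum, ← Finset.sum_sub_distrib, ← Finset.sum_add_distrib]
    exact Finset.sum_congr rfl fun i _ => by ring
  unfold projObj
  rw [h, h]
  ring

lemma nonpos_of_quadratic {p q : ℝ} (h : ∀ t : ℝ, 0 ≤ t → t ≤ 1 → 0 ≤ -(t * p) + t ^ 2 * q) :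
    p ≤ 0 := by
  by_contra! hp
  have hq : p ≤ q := by have := h 1 (by norm_num) le_rfl; linarith
  have hq0 : 0 < q := lt_of_lt_of_le hp hq
  -- `t = p / (2q)` minimizes the quadratic, with value `-p² / (4q) < 0`.
  have h1 := h (p / (2 * q)) (by positivity) (by rw [div_le_one (by positivity)]; linarith)
  have h2 : -(p / (2 * q) * p) + (p / (2 * q)) ^ 2 * q = -(p ^ 2 / (4 * q)) := by
    field_simp
    ring
  have h3 : 0 < p ^ 2 / (4 * q) := by positivity
  linarith

lemma TopkSimplex.add_smul {m n k : ℕ} {α x : Fin m → ℝ} {β y : Fin n → ℝ}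
    (h : TopkSimplex m n k α β) (h' : TopkSimplex m n k x y) {t : ℝ} (ht : 0 ≤ t) :
    TopkSimplex m n k (fun i => α i + t * x i) (fun j => β j + t * y j) := by
  obtain ⟨h1, h2, h3, h4⟩ := h
  obtain ⟨g1, g2, g3, g4⟩ := h'
  refine ⟨fun i => add_nonneg (h1 i) (mul_nonneg ht (g1 i)),
    fun j => add_nonneg (h2 j) (mul_nonneg ht (g2 j)), ?_, fun j => ?_⟩
  · simp only [Finset.sum_add_distrib, ← Finset.mul_sum, h3, g3]
  · simp only [Finset.sum_add_distrib, ← Finset.mul_sum]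
    have := mul_le_mul_of_nonneg_left (g4 j) ht
    linarith [h4 j]

lemma TopkSimplex.shrink {m n k : ℕ} {α : Fin m → ℝ} {β : Fin n → ℝ}
    (h : TopkSimplex m n k α β) {t : ℝ} (ht : t ≤ 1) :
    TopkSimplex m n k (fun i => α i + (-t) * α i) (fun j => β j + (-t) * β j) := by
  obtain ⟨h1, h2, h3, h4⟩ := h
  have ht' : 0 ≤ 1 - t := by linarith
  refine ⟨fun i => ?_, fun j => ?_, ?_, fun j => ?_⟩
  · have := mul_nonneg ht' (h1 i)
    linarith
  · have := mul_nonneg ht' (h2 j)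
    linarith
  · simp only [Finset.sum_add_distrib, ← Finset.mul_sum, h3]
  · simp only [Finset.sum_add_distrib, ← Finset.mul_sum]
    have := mul_le_mul_of_nonneg_left (h4 j) ht'
    linarith

lemma alpha_term_bound {x x0 xs lam : ℝ} (hx : 0 ≤ x) (hs : xs = max (x0 - lam) 0) :
    -lam * (x - xs) ≤ (1 / 2) * (x - x0) ^ 2 - (1 / 2) * (xs - x0) ^ 2 := by
  rcases le_total (x0 - lam) 0 with h | h
  · rw [max_eq_right h] at hs
    subst hs
    nlinarith [mul_nonneg hx (sub_nonneg.2 h), sq_nonneg x]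
  · rw [max_eq_left h] at hs
    subst hs
    nlinarith [sq_nonneg (x - (x0 - lam))]

/-- Here `c` and `d` are the upper bounds for the reference entry `ys` and the competitor `y`;
`max (y0 - mu - c) 0` is the multiplier of the upper bound. -/
lemma beta_term_bound {y y0 ys mu c d : ℝ} (hy : 0 ≤ y) (hyd : y ≤ d) (hc : 0 ≤ c)
    (hs : ys = min (max (y0 - mu) 0) c) :
    -mu * (y - ys) - max (y0 - mu - c) 0 * (d - c) ≤
      (1 / 2) * (y - y0) ^ 2 - (1 / 2) * (ys - y0) ^ 2 := by
  rcases le_total (y0 - mu - c) 0 with h | h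
  · rw [max_eq_right h]
    have hs' : ys = max (y0 - mu) 0 := by
      rw [hs, min_eq_left (max_le (by linarith) hc)]
    have := alpha_term_bound hy hs'
    linarith
  · rw [max_eq_left h]
    have hs' : ys = c := by
      rw [hs, min_eq_right (le_max_of_le_left (by linarith))]
    subst hs'
    nlinarith [mul_nonneg h (sub_nonneg.2 hyd), sq_nonneg (y - ys)]

/-- KKT characterization of the Euclidean projection onto the top-`k`
simplex `Γ_k`. -/
theorem projection_topk_simplex_optimality_characterization
    (m n k : ℕ) (hk1 : 1 ≤ k) (hkn : k ≤ n)
    (α0 : Fin m → ℝ) (β0 : Fin n → ℝ)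
    (αs : Fin m → ℝ) (βs : Fin n → ℝ) (hfeas : TopkSimplex m n k αs βs) :
    (∀ α β, TopkSimplex m n k α β → projObj α0 β0 αs βs ≤ projObj α0 β0 α β) ↔
      ∃ C lam mu : ℝ, 0 ≤ C ∧
        C = (∑ i, max (α0 i - lam) 0) ∧
        C = (∑ j, min (max (β0 j - mu) 0) (C / k)) ∧
        0 = lam + mu + (1 / (k : ℝ)) * ∑ j, max (β0 j - mu - C / k) 0 ∧
        (∀ i, αs i = max (α0 i - lam) 0) ∧
        (∀ j, βs j = min (max (β0 j - mu) 0) (C / k)) := by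
  have hk : (0 : ℝ) < k := by exact_mod_cast hk1
  constructor
  · intro hopt
    have hvar : ∀ x y, TopkSimplex m n k x y →
        (∑ i, (α0 i - αs i) * x i) + ∑ j, (β0 j - βs j) * y j ≤ 0 := by
      intro x y hxy
      refine nonpos_of_quadratic (q := (1 / 2) * ((∑ i, x i ^ 2) + ∑ j, y j ^ 2)) ?_
      intro t ht _
      have h := hopt _ _ (hfeas.add_smul hxy ht)
      rw [projObj_add_smul] at h
      linarith
    have hself : 0 ≤ (∑ i, (α0 i - αs i) * αs i) + ∑ j, (β0 j - βs j) * βs j := by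
      rw [← neg_nonpos]
      refine nonpos_of_quadratic (q := (1 / 2) * ((∑ i, αs i ^ 2) + ∑ j, βs j ^ 2)) ?_
      intro t _ ht
      have h := hopt _ _ (hfeas.shrink ht)
      rw [projObj_add_smul] at h
      linarith
    obtain ⟨S, mu, hcard, hS, hSc⟩ := exists_topk hk1 hkn (fun j => β0 j - βs j)
    set C : ℝ := ∑ i, αs i with hC
    set N : ℝ := ∑ j, max (β0 j - βs j - mu) 0 with hN
    obtain ⟨f1, f2, f3, f4⟩ := hfeas
    have f4' : ∀ j, βs j ≤ C / k := fun j => by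
      have := f4 j
      rwa [one_div_mul_eq_div] at this
    have hC0 : 0 ≤ C := Finset.sum_nonneg fun i _ => f1 i
    have hNS : N = (∑ j ∈ S, (β0 j - βs j)) - k * mu := by
      have h1 : N = ∑ j ∈ S, (β0 j - βs j - mu) := by
        rw [hN, ← Finset.sum_subset (Finset.subset_univ S)]
        · exact Finset.sum_congr rfl fun j hj => max_eq_left (sub_nonneg.2 (hS j hj))
        · exact fun j _ hj => max_eq_right (sub_nonpos.2 (hSc j hj))
      rw [h1, Finset.sum_sub_distrib, Finset.sum_const, hcard, nsmul_eq_mul]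
    set lam : ℝ := -(mu + (1 / (k : ℝ)) * N) with hlam
    have ha : ∀ i, α0 i - αs i ≤ lam := by
      intro i
      have hsumi : ∑ i', (if i' = i then (1 : ℝ) else 0) = 1 := by simp
      have hsumS : ∑ j, (if j ∈ S then 1 / (k : ℝ) else 0) = 1 := by
        rw [← Finset.sum_filter]
        simp only [Finset.filter_mem_eq_inter, Finset.univ_inter, Finset.sum_const, hcard,
          nsmul_eq_mul]
        field_simp
      have h := hvar (fun i' => if i' = i then 1 else 0)
        (fun j => if j ∈ S then 1 / (k : ℝ) else 0) (by
          refine ⟨fun i' => ?_, fun j => ?_, ?_, fun j => ?_⟩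
          · dsimp only
            split_ifs <;> norm_num
          · dsimp only
            split_ifs <;> positivity
          · rw [hsumi, hsumS]
          · rw [hsumi, mul_one]
            dsimp only
            split_ifs
            · exact le_rfl
            · positivity)
      have h2 : ∑ j, (β0 j - βs j) * (if j ∈ S then 1 / (k : ℝ) else 0) =
          (1 / (k : ℝ)) * ∑ j ∈ S, (β0 j - βs j) := by
        simp only [mul_ite, mul_zero]
        rw [← Finset.sum_filter]
        simp only [Finset.filter_mem_eq_inter, Finset.univ_inter]
        rw [Finset.mul_sum]
        exact Finset.sum_congr rfl fun j _ => mul_comm _ _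
      rw [h2] at h
      simp only [mul_ite, mul_one, mul_zero, Finset.sum_ite_eq', Finset.mem_univ, if_true] at h
      have h3 : lam = -((1 / (k : ℝ)) * ∑ j ∈ S, (β0 j - βs j)) := by
        rw [hlam, hNS]
        field_simp
        ring
      linarith
    -- Nonnegative slacks whose total is at most zero.
    have hA : ∀ i, 0 ≤ (lam - (α0 i - αs i)) * αs i :=
      fun i => mul_nonneg (sub_nonneg.2 (ha i)) (f1 i)
    have hB : ∀ j, 0 ≤ mu * βs j + max (β0 j - βs j - mu) 0 * (C / k)
        - (β0 j - βs j) * βs j := by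
      intro j
      have h1 := mul_le_mul_of_nonneg_left (f4' j) (le_max_right (β0 j - βs j - mu) 0)
      have h2 := mul_le_mul_of_nonneg_right (le_max_left (β0 j - βs j - mu) 0) (f2 j)
      linarith
    have hAsum : ∑ i, (lam - (α0 i - αs i)) * αs i =
        lam * C - ∑ i, (α0 i - αs i) * αs i := by
      rw [hC, Finset.mul_sum, ← Finset.sum_sub_distrib]
      exact Finset.sum_congr rfl fun i _ => by ring
    have hBsum : ∑ j, (mu * βs j + max (β0 j - βs j - mu) 0 * (C / k)
        - (β0 j - βs j) * βs j) = mu * C + N * (C / k) - ∑ j, (β0 j - βs j) * βs j := by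
      rw [Finset.sum_sub_distrib, Finset.sum_add_distrib, ← Finset.mul_sum, ← Finset.sum_mul,
        ← f3]
    have hzero : lam * C + (mu * C + N * (C / k)) = 0 := by
      rw [hlam]
      ring
    have hA0 := Finset.sum_nonneg fun i (_ : i ∈ Finset.univ) => hA i
    have hB0 := Finset.sum_nonneg fun j (_ : j ∈ Finset.univ) => hB j
    have hAz : ∀ i, (lam - (α0 i - αs i)) * αs i = 0 := fun i =>
      (Finset.sum_eq_zero_iff_of_nonneg fun i _ => hA i).1 (by linarith) i (Finset.mem_univ i)
    have hBz : ∀ j, mu * βs j + max (β0 j - βs j - mu) 0 * (C / k)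
        - (β0 j - βs j) * βs j = 0 := fun j =>
      (Finset.sum_eq_zero_iff_of_nonneg fun j _ => hB j).1 (by linarith) j (Finset.mem_univ j)
    have hαs : ∀ i, αs i = max (α0 i - lam) 0 := by
      intro i
      rcases mul_eq_zero.1 (hAz i) with h | h
      · have h1 : α0 i - lam = αs i := by linarith
        rw [h1, max_eq_left (f1 i)]
      · have h1 : α0 i - lam ≤ 0 := by linarith [ha i]
        rw [max_eq_right h1, h]
    have hβ : ∀ j, βs j = min (max (β0 j - mu) 0) (C / k) ∧
        max (β0 j - mu - C / k) 0 = max (β0 j - βs j - mu) 0 := by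
      intro j
      have hz := hBz j
      have hle := f4' j
      have hnn := f2 j
      rcases lt_trichotomy (β0 j - βs j) mu with h | h | h
      · rw [max_eq_right (by linarith)] at hz
        have h0 : βs j = 0 := by
          have h1 : (mu - (β0 j - βs j)) * βs j = 0 := by linarith
          exact (mul_eq_zero.1 h1).resolve_left (by linarith)
        constructor
        · rw [max_eq_right (by linarith), min_eq_left (by linarith), h0]
        · rw [max_eq_right (by linarith), max_eq_right (by linarith)]
      · constructor
        · rw [max_eq_left (by linarith), min_eq_left (by linarith)]
          linarith
        · rw [max_eq_right (by linarith), max_eq_right (by linarith)]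
      · rw [max_eq_left (by linarith)] at hz
        have h0 : βs j = C / k := by
          have h1 : (β0 j - βs j - mu) * (C / k - βs j) = 0 := by linarith
          have h2 := (mul_eq_zero.1 h1).resolve_left (by linarith)
          linarith
        constructor
        · rw [max_eq_left (by linarith), min_eq_right (by linarith), h0]
        · rw [← h0]
          congr 1
          ring
    refine ⟨C, lam, mu, hC0, ?_, ?_, ?_, hαs, fun j => (hβ j).1⟩
    · exact Finset.sum_congr rfl fun i _ => hαs i
    · exact f3.trans (Finset.sum_congr rfl fun j _ => (hβ j).1)
    · rw [Finset.sum_congr rfl fun j _ => (hβ j).2, ← hN, hlam]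
      ring
  · rintro ⟨C, lam, mu, hC0, hCa, hCb, hc, hα, hβ⟩ α β ⟨g1, g2, g3, g4⟩
    have hCk : 0 ≤ C / k := by positivity
    have hsα : ∑ i, αs i = C := by rw [hCa]; exact Finset.sum_congr rfl fun i _ => hα i
    have hsβ : ∑ j, βs j = C := by rw [← hsα]; exact hfeas.2.2.1.symm
    have h1 := Finset.sum_le_sum fun i (_ : i ∈ Finset.univ) => alpha_term_bound (g1 i) (hα i)
    have h2 := Finset.sum_le_sum fun j (_ : j ∈ Finset.univ) =>
      beta_term_bound (g2 j) (g4 j) hCk (hβ j)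
    simp only [Finset.sum_sub_distrib, ← Finset.mul_sum, ← Finset.sum_mul] at h1 h2
    rw [hsα] at h1
    rw [hsβ, ← g3] at h2
    unfold projObj
    set D := ∑ i, α i
    set N := ∑ j, max (β0 j - mu - C / k) 0
    have h3 : lam * (D - C) + mu * (D - C) + N * (1 / (k : ℝ) * D - C / k) = 0 := by
      have : lam * (D - C) + mu * (D - C) + N * (1 / (k : ℝ) * D - C / k) =
          (lam + mu + 1 / (k : ℝ) * N) * (D - C) := by ring
      rw [this, ← hc, zero_mul]
    linarith
end

section
/- Let α⁰ ∈ ℝ^m, β⁰ ∈ ℝ^n, and let k be an integer with 1 ≤ k ≤ n. The pair (0^m, 0^n) of zero vectors is an optimal solution of the projection problem (minimize ½‖α − α⁰‖² + ½‖β − β⁰‖² over Γ_k) if and only if k·α_[1]⁰ + Σ_{j=1}^k β_[j]⁰ ≤ 0, where α_[1]⁰ is the largest entry of α⁰ and β_[1]⁰ ≥ ... ≥ β_[k]⁰ are the k largest entries of β⁰. -/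
/-- A permutation sorting `v` in decreasing order realizes all the values `kthLargest v`. -/
lemma exists_perm_kthLargest {n : ℕ} (v : Fin n → ℝ) :
    ∃ σ : Equiv.Perm (Fin n), Antitone (v ∘ σ) ∧
      ∀ j : Fin n, kthLargest v ((j : ℕ) + 1) = v (σ j) := by
  set σ := Tuple.sort (fun i => - v i)
  have hanti : Antitone (v ∘ σ) := by
    intro a b hab
    have := Tuple.monotone_sort (fun i => - v i) hab
    simpa using this
  have hEq : (List.ofFn v).insertionSort (· ≥ ·) = List.ofFn (v ∘ σ) := by
    apply List.Perm.eq_of_pairwise (le := (· ≥ ·))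
    · intro a b _ _ h1 h2
      exact le_antisymm h2 h1
    · exact List.pairwise_insertionSort _ _
    · rw [List.pairwise_ofFn]
      intro i j hij
      exact hanti hij.le
    · exact (List.perm_insertionSort _ _).trans (Equiv.Perm.ofFn_comp_perm σ v).symm
  refine ⟨σ, hanti, fun j => ?_⟩
  unfold kthLargest
  rw [hEq]
  simp

lemma sum_fin_ite_lt {n k : ℕ} (hkn : k ≤ n) (g : ℕ → ℝ) :
    (∑ j : Fin n, if (j : ℕ) < k then g j else 0) = ∑ j ∈ Finset.range k, g j := by
  rw [Fin.sum_univ_eq_sum_range (fun j => if j < k then g j else 0) n, ← Finset.sum_filter]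
  congr 1
  ext j
  simp only [Finset.mem_filter, Finset.mem_range]
  omega

lemma le_kthLargest_one {m : ℕ} (v : Fin m → ℝ) (i : Fin m) : v i ≤ kthLargest v 1 := by
  obtain ⟨σ, hσ, hv⟩ := exists_perm_kthLargest v
  have hm : 0 < m := i.pos
  have h0 := hv ⟨0, hm⟩
  simp only [zero_add] at h0
  rw [h0]
  have h : (⟨0, hm⟩ : Fin m) ≤ σ.symm i := Fin.mk_le_of_le_val (Nat.zero_le _)
  simpa using hσ h

/-- A weight vector with entries in `[0, c]` and total mass `k c` has inner product with `v` at most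
`c` times the sum of the `k` largest entries of `v`. -/
lemma inner_le_topk {n k : ℕ} (hk1 : 1 ≤ k) (hkn : k ≤ n) (v β : Fin n → ℝ) (c : ℝ)
    (h0 : ∀ j, 0 ≤ β j) (hc : ∀ j, β j ≤ c) (hs : ∑ j, β j = k * c) :
    ∑ j, β j * v j ≤ c * ∑ j ∈ Finset.range k, kthLargest v (j + 1) := by
  obtain ⟨σ, hσ, hv⟩ := exists_perm_kthLargest v
  -- The threshold `θ` is the `k`-th largest entry, at 0-based position `k - 1`.
  set p : Fin n := ⟨k - 1, by omega⟩ with hp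
  set θ := v (σ p) with hθ
  have key : ∑ j, β (σ j) * (v (σ j) - θ) ≤
      ∑ j : Fin n, if (j : ℕ) < k then c * (kthLargest v ((j : ℕ) + 1) - θ) else 0 := by
    apply Finset.sum_le_sum
    intro j _
    split_ifs with hj
    · rw [hv j]
      have hjp : j ≤ p := by
        rw [Fin.le_def, hp]
        show (j : ℕ) ≤ k - 1
        omega
      have h1 : θ ≤ v (σ j) := hσ hjp
      exact mul_le_mul_of_nonneg_right (hc _) (by linarith)
    · have hjp : p ≤ j := by
        rw [Fin.le_def, hp]
        show k - 1 ≤ (j : ℕ)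
        omega
      have h1 : v (σ j) ≤ θ := hσ hjp
      exact mul_nonpos_of_nonneg_of_nonpos (h0 _) (by linarith)
  rw [sum_fin_ite_lt hkn (fun j => c * (kthLargest v (j + 1) - θ)),
    Equiv.sum_comp σ (fun j => β j * (v j - θ))] at key
  simp only [mul_sub, Finset.sum_sub_distrib, ← Finset.sum_mul, ← Finset.mul_sum, hs,
    Finset.sum_const, Finset.card_range, nsmul_eq_mul] at key
  linarith

lemma projObj_eq {m n : ℕ} (α0 : Fin m → ℝ) (β0 : Fin n → ℝ) (α : Fin m → ℝ) (β : Fin n → ℝ) :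
    projObj α0 β0 α β = projObj α0 β0 (fun _ => 0) (fun _ => 0) +
      (1 / 2) * (∑ i, α i ^ 2 + ∑ j, β j ^ 2) - (∑ i, α i * α0 i + ∑ j, β j * β0 j) := by
  have h : ∀ {l : ℕ} (x y : Fin l → ℝ), ∑ i, (x i - y i) ^ 2 =
      ∑ i, (0 - y i) ^ 2 + ∑ i, x i ^ 2 - 2 * ∑ i, x i * y i := by
    intro l x y
    rw [Finset.mul_sum, ← Finset.sum_add_distrib, ← Finset.sum_sub_distrib]
    exact Finset.sum_congr rfl fun i _ => by ring
  unfold projObj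
  rw [h α α0, h β β0]
  ring

/-- zero case: `(0, 0)` is optimal for the projection onto `Γ_k`
iff `k·α⁰_[1] + Σ_{j=1}^k β⁰_[j] ≤ 0`. -/
theorem projection_topk_simplex_zero_optimal_iff
    (m n k : ℕ) (hm : 1 ≤ m) (hk1 : 1 ≤ k) (hkn : k ≤ n)
    (α0 : Fin m → ℝ) (β0 : Fin n → ℝ) :
    (∀ α β, TopkSimplex m n k α β →
        projObj α0 β0 (fun _ => 0) (fun _ => 0) ≤ projObj α0 β0 α β) ↔
      (k : ℝ) * kthLargest α0 1 + (∑ j ∈ Finset.range k, kthLargest β0 (j + 1)) ≤ 0 := by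
  have hk : (0 : ℝ) < k := by exact_mod_cast hk1
  constructor
  · intro hopt
    by_contra! hS
    set S := (k : ℝ) * kthLargest α0 1 + (∑ j ∈ Finset.range k, kthLargest β0 (j + 1)) with hSdef
    obtain ⟨σ, -, hσ⟩ := exists_perm_kthLargest α0
    obtain ⟨τ, -, hτ⟩ := exists_perm_kthLargest β0
    have hmax := hσ ⟨0, hm⟩
    simp only [zero_add] at hmax
    set i0 := σ ⟨0, hm⟩
    -- Along the ray with step `k c` the objective changes by `(k (k + 1) / 2) c² - c S`,
    -- which is negative for this `c`.
    set c : ℝ := S / (k * (k + 1)) with hc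
    have hcpos : 0 < c := by positivity
    have hcS : c * (k * (k + 1)) = S := by rw [hc]; field_simp
    set α : Fin m → ℝ := fun i => if i = i0 then k * c else 0 with hα
    set β : Fin n → ℝ := fun j => if ((τ.symm j : Fin n) : ℕ) < k then c else 0 with hβ
    have sα : ∑ i, α i = k * c := by simp [hα]
    have sα2 : ∑ i, α i ^ 2 = (k * c) ^ 2 := by simp [hα, ite_pow]
    have sαα : ∑ i, α i * α0 i = k * c * kthLargest α0 1 := by simp [hα, hmax]
    have sβ : ∑ j, β j = k * c := by
      rw [← Equiv.sum_comp τ]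
      simp only [hβ, Equiv.symm_apply_apply]
      rw [sum_fin_ite_lt hkn (fun _ => c)]
      simp
    have sβ2 : ∑ j, β j ^ 2 = k * c ^ 2 := by
      rw [← Equiv.sum_comp τ]
      simp only [hβ, Equiv.symm_apply_apply, ite_pow, ne_eq, OfNat.ofNat_ne_zero,
        not_false_eq_true, zero_pow]
      rw [sum_fin_ite_lt hkn (fun _ => c ^ 2)]
      simp
    have sββ : ∑ j, β j * β0 j = c * ∑ j ∈ Finset.range k, kthLargest β0 (j + 1) := by
      rw [← Equiv.sum_comp τ, Finset.mul_sum,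
        ← sum_fin_ite_lt hkn (fun j => c * kthLargest β0 (j + 1))]
      refine Finset.sum_congr rfl fun j _ => ?_
      simp only [hβ, Equiv.symm_apply_apply, hτ, ite_mul, zero_mul]
    have hfeas : TopkSimplex m n k α β := by
      refine ⟨fun i => ?_, fun j => ?_, by rw [sα, sβ], fun j => ?_⟩
      · simp only [hα]; split_ifs <;> positivity
      · simp only [hβ]; split_ifs <;> positivity
      · rw [sα]
        have : 1 / (k : ℝ) * (k * c) = c := by field_simp
        rw [this]
        simp only [hβ]; split_ifs <;> linarith
    have h := hopt α β hfeas
    rw [projObj_eq α0 β0 α β, sα2, sβ2, sαα, sββ] at h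
    have h1 : c * S ≤ c * S / 2 := by
      have e1 : c * S = k * c * kthLargest α0 1 +
          c * ∑ j ∈ Finset.range k, kthLargest β0 (j + 1) := by rw [hSdef]; ring
      have e2 : c * S = (k * c) ^ 2 + k * c ^ 2 := by rw [← hcS]; ring
      linarith
    have : 0 < c * S := mul_pos hcpos hS
    linarith
  · rintro hS α β ⟨hα, hβ, hsum, hle⟩
    have hα1 : ∑ i, α i * α0 i ≤ (∑ i, α i) * kthLargest α0 1 := by
      rw [Finset.sum_mul]
      exact Finset.sum_le_sum fun i _ =>
        mul_le_mul_of_nonneg_left (le_kthLargest_one α0 i) (hα i)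
    set c := 1 / (k : ℝ) * ∑ i, α i with hc
    have hkc : ∑ i, α i = k * c := by rw [hc]; field_simp
    have hc0 : 0 ≤ c := mul_nonneg (by positivity) (Finset.sum_nonneg fun i _ => hα i)
    have hβ1 := inner_le_topk hk1 hkn β0 β c hβ hle (hsum ▸ hkc)
    have h1 : 0 ≤ ∑ i, α i ^ 2 := Finset.sum_nonneg fun i _ => sq_nonneg _
    have h2 : 0 ≤ ∑ j, β j ^ 2 := Finset.sum_nonneg fun i _ => sq_nonneg _
    have h3 := mul_nonpos_of_nonneg_of_nonpos hc0 hS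
    rw [hkc] at hα1
    rw [projObj_eq α0 β0 α β]
    linarith
end

section
/- Let β⁰ ∈ ℝ^n, let k be an integer with 1 ≤ k < n, and set C₀ = k·(β_[k]⁰ − β_[k+1]⁰), where β_[j]⁰ denotes the j-th largest entry of β⁰. If C > C₀ and C > 0, then there exists a unique μ ∈ ℝ satisfying Σ_{j=1}^n min{[β_j⁰ − μ]_+, C/k} = C. -/
/-- In a decreasing list, the entries `≥ t` are exactly the initial ones, so comparing an entry
with `t` amounts to comparing its position with the number of entries `≥ t`. -/
lemma le_getD_iff_lt_countP (t : ℝ) (l : List ℝ) (hl : l.Pairwise (· ≥ ·)) :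
    ∀ i < l.length, (t ≤ l.getD i 0 ↔ i < l.countP (fun x => decide (t ≤ x))) := by
  induction l with
  | nil => intro i hi; simp at hi
  | cons a l ih =>
    rw [List.pairwise_cons] at hl
    intro i hi
    by_cases ha : t ≤ a
    · rw [List.countP_cons_of_pos (by simpa using ha)]
      cases i with
      | zero => simp [ha]
      | succ i =>
        rw [List.getD_cons_succ, ih hl.2 i (by simpa using hi)]
        omega
    · have h0 : ∀ x ∈ a :: l, ¬ t ≤ x := by
        intro x hx htx
        rcases List.mem_cons.1 hx with rfl | hx
        · exact ha htx
        · exact ha (htx.trans (hl.1 x hx))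
      have hc : (a :: l).countP (fun x => decide (t ≤ x)) = 0 := by
        rw [List.countP_eq_zero]
        intro x hx
        simpa using h0 x hx
      rw [hc, List.getD_eq_getElem _ _ hi]
      simpa using h0 _ (List.getElem_mem hi)

lemma countP_ofFn (t : ℝ) {n : ℕ} (v : Fin n → ℝ) :
    (List.ofFn v).countP (fun x => decide (t ≤ x))
      = (Finset.univ.filter fun j => t ≤ v j).card := by
  induction n with
  | zero => simp
  | succ n ih =>
    rw [List.ofFn_succ, List.countP_cons, ih, Fin.card_filter_univ_succ']
    simp [add_comm]

lemma le_kthLargest_succ_iff (t : ℝ) {n : ℕ} (v : Fin n → ℝ) (i : ℕ) (hi : i < n) :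
    t ≤ kthLargest v (i + 1) ↔ i < (Finset.univ.filter fun j => t ≤ v j).card := by
  unfold kthLargest
  rw [Nat.add_sub_cancel, le_getD_iff_lt_countP t _ (List.pairwise_insertionSort _ _) i
    (by simpa using hi), (List.perm_insertionSort _ _).countP_eq, countP_ofFn]

/-- Two distinct solutions `a < b` would open a gap of size more than `C / k` between the `k`-th
and `(k + 1)`-st largest entries. -/
lemma not_two_solutions (n k : ℕ) (hk1 : 1 ≤ k) (hkn : k < n) (β0 : Fin n → ℝ)
    (C : ℝ) (hC0 : C > (k : ℝ) * (kthLargest β0 k - kthLargest β0 (k + 1)))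
    (hCpos : 0 < C) (a b : ℝ) (hab : a < b)
    (ha : (∑ j, min (max (β0 j - a) 0) (C / k)) = C)
    (hb : (∑ j, min (max (β0 j - b) 0) (C / k)) = C) : False := by
  have hk : (0 : ℝ) < k := by exact_mod_cast hk1
  obtain ⟨D, hD⟩ : ∃ D, D = C / k := ⟨_, rfl⟩
  have hDpos : 0 < D := hD ▸ div_pos hCpos hk
  have hCD : C = k * D := by rw [hD]; field_simp
  rw [← hD] at ha hb
  have hle : ∀ j ∈ Finset.univ,
      min (max (β0 j - b) 0) D ≤ min (max (β0 j - a) 0) D := by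
    intro j _
    gcongr
  have heq := (Finset.sum_eq_sum_iff_of_le hle).1 (hb.trans ha.symm)
  have hdich : ∀ j, β0 j ≤ a ∨ b + D ≤ β0 j := by
    intro j
    have := heq j (Finset.mem_univ j)
    by_contra! h
    rw [max_eq_left (by linarith : 0 ≤ β0 j - a)] at this
    have h1 : max (β0 j - b) 0 < β0 j - a := max_lt (by linarith) (by linarith)
    have h2 : max (β0 j - b) 0 < D := max_lt (by linarith) hDpos
    rw [min_eq_left h2.le] at this
    exact absurd this (lt_min h1 h2).ne
  have hterm : ∀ j, min (max (β0 j - b) 0) D = if b + D ≤ β0 j then D else 0 := by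
    intro j
    split_ifs with h
    · exact min_eq_right (le_max_of_le_left (by linarith))
    · have := (hdich j).resolve_right h
      rw [max_eq_right (by linarith), min_eq_left hDpos.le]
  have hcard : (Finset.univ.filter fun j => b + D ≤ β0 j).card = k := by
    simp_rw [hterm] at hb
    rw [← Finset.sum_filter, Finset.sum_const, nsmul_eq_mul, hCD] at hb
    exact_mod_cast mul_right_cancel₀ hDpos.ne' hb
  have h1 : b + D ≤ kthLargest β0 k := by
    have := le_kthLargest_succ_iff (b + D) β0 (k - 1) (by omega)
    rw [Nat.sub_add_cancel hk1, hcard] at this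
    exact this.2 (by omega)
  have h2 : kthLargest β0 (k + 1) ≤ a := by
    by_contra! h
    -- an entry exceeding `a` is at least `b + D`, so more than `k` entries would be `≥ b + D`
    have h3 := (le_kthLargest_succ_iff _ β0 k hkn).1 le_rfl
    refine absurd h3 (not_lt.2 ?_)
    refine le_trans (Finset.card_le_card ?_) hcard.le
    intro j hj
    simp only [Finset.mem_filter, Finset.mem_univ, true_and] at hj ⊢
    exact (hdich j).resolve_left (by linarith)
  have h3 : (k : ℝ) * D < k * (kthLargest β0 k - kthLargest β0 (k + 1)) :=
    mul_lt_mul_of_pos_left (by linarith) hk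
  linarith

/-- if `C > C₀ = k(β⁰_[k] − β⁰_[k+1])` and `C > 0`, then there is a unique
`μ` with `Σ_j min{[β⁰_j − μ]_+, C/k} = C`. -/
theorem unique_mu_of_C_gt_C0
    (n k : ℕ) (hk1 : 1 ≤ k) (hkn : k < n) (β0 : Fin n → ℝ)
    (C : ℝ) (hC0 : C > (k : ℝ) * (kthLargest β0 k - kthLargest β0 (k + 1)))
    (hCpos : 0 < C) :
    ∃! μ : ℝ, (∑ j, min (max (β0 j - μ) 0) (C / k)) = C := by
  have hk : (0 : ℝ) < k := by exact_mod_cast hk1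
  have hDpos : 0 < C / k := div_pos hCpos hk
  have hcont : Continuous fun μ : ℝ => ∑ j, min (max (β0 j - μ) 0) (C / k) := by fun_prop
  have hbound : ∀ j, |β0 j| ≤ ∑ i, |β0 i| := fun j =>
    Finset.single_le_sum (f := fun i => |β0 i|) (fun i _ => abs_nonneg _) (Finset.mem_univ j)
  have hhigh : (∑ j, min (max (β0 j - ∑ i, |β0 i|) 0) (C / k)) ≤ C := by
    refine (Finset.sum_nonpos fun j _ => min_le_of_left_le (max_le ?_ le_rfl)).trans hCpos.le
    linarith [hbound j, le_abs_self (β0 j)]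
  have hlow : C ≤ ∑ j, min (max (β0 j - (-(∑ i, |β0 i|) - C / k)) 0) (C / k) := by
    have : ∀ j, min (max (β0 j - (-(∑ i, |β0 i|) - C / k)) 0) (C / k) = C / k := fun j =>
      min_eq_right (le_max_of_le_left (by linarith [hbound j, neg_abs_le (β0 j)]))
    simp_rw [this]
    rw [Finset.sum_const, nsmul_eq_mul, Finset.card_univ, Fintype.card_fin]
    calc C = k * (C / k) := by field_simp
      _ ≤ n * (C / k) := by gcongr
  obtain ⟨μ, hμ⟩ := mem_range_of_exists_le_of_exists_ge hcont ⟨_, hhigh⟩ ⟨_, hlow⟩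
  refine ⟨μ, hμ, fun ν hν => ?_⟩
  rcases lt_trichotomy ν μ with h | h | h
  · exact (not_two_solutions n k hk1 hkn β0 C hC0 hCpos ν μ h hν hμ).elim
  · exact h
  · exact (not_two_solutions n k hk1 hkn β0 C hC0 hCpos μ ν h hμ hν).elim
end

section
/- Let β⁰ ∈ ℝ^n, let k be an integer with 1 ≤ k < n, let C > 0, and define g(μ) = Σ_{j=1}^n min{[β_j⁰ − μ]_+, C/k} − C, where β_[j]⁰ denotes the j-th largest entry of β⁰. Then g(β_[k]⁰) ≤ −C/k < 0 and g(β_[k+1]⁰ − C/k) ≥ C/k > 0; consequently, every root μ′ of g(μ) = 0 satisfies β_[k+1]⁰ − C/k < μ′ < β_[k]⁰. -/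
/-- If the entries of a decreasing list from (0-based) position `m` on contribute at most `0`
each and every contribution is at most `c`, the total is at most `m * c`. -/
lemma sum_map_le_of_pairwise_ge (l : List ℝ) (hl : l.Pairwise (· ≥ ·)) (m : ℕ)
    (hm : m < l.length) (f : ℝ → ℝ) (c : ℝ) (hc : ∀ x, f x ≤ c)
    (h0 : ∀ x ≤ l[m], f x ≤ 0) : (l.map f).sum ≤ m * c := by
  rw [← List.take_append_drop m l, List.map_append, List.sum_append]
  have h1 : ((l.take m).map f).sum ≤ m * c := by
    have := List.sum_le_card_nsmul ((l.take m).map f) c (by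
      intro y hy
      obtain ⟨x, -, rfl⟩ := List.mem_map.1 hy
      exact hc x)
    simpa [hm.le] using this
  have h2 : ((l.drop m).map f).sum ≤ 0 := by
    have := List.sum_le_card_nsmul ((l.drop m).map f) 0 (by
      intro y hy
      obtain ⟨x, hx, rfl⟩ := List.mem_map.1 hy
      apply h0
      obtain ⟨i, hi, rfl⟩ := List.mem_iff_getElem.1 hx
      rw [List.getElem_drop]
      rcases Nat.eq_zero_or_pos i with rfl | hpos
      · simp
      · exact List.pairwise_iff_getElem.1 hl m (m + i) hm _ (by omega))
    simpa using this
  linarith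

/-- If the entries of a decreasing list up to (0-based) position `m` contribute at least `c`
each and every contribution is nonnegative, the total is at least `(m + 1) * c`. -/
lemma le_sum_map_of_pairwise_ge (l : List ℝ) (hl : l.Pairwise (· ≥ ·)) (m : ℕ)
    (hm : m < l.length) (f : ℝ → ℝ) (c : ℝ) (h0 : ∀ x, 0 ≤ f x)
    (hc : ∀ x, l[m] ≤ x → c ≤ f x) : (m + 1) * c ≤ (l.map f).sum := by
  rw [← List.take_append_drop (m + 1) l, List.map_append, List.sum_append]
  have h1 : (m + 1) * c ≤ ((l.take (m + 1)).map f).sum := by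
    have := List.card_nsmul_le_sum ((l.take (m + 1)).map f) c (by
      intro y hy
      obtain ⟨x, hx, rfl⟩ := List.mem_map.1 hy
      apply hc
      obtain ⟨i, hi, rfl⟩ := List.mem_iff_getElem.1 hx
      rw [List.getElem_take]
      have hi' : i < m + 1 := by
        rw [List.length_take] at hi
        omega
      rcases Nat.lt_succ_iff_lt_or_eq.1 hi' with hlt | rfl
      · exact List.pairwise_iff_getElem.1 hl i m _ hm hlt
      · exact le_rfl)
    rw [List.length_map, List.length_take, min_eq_left (by omega), nsmul_eq_mul] at this
    exact_mod_cast this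
  have h2 : 0 ≤ ((l.drop (m + 1)).map f).sum := by
    apply List.sum_nonneg
    intro y hy
    obtain ⟨x, -, rfl⟩ := List.mem_map.1 hy
    exact h0 x
  linarith

/-- sign evaluations of `g(μ) = Σ_j min{[β⁰_j − μ]_+, C/k} − C` at
`β⁰_[k]` and `β⁰_[k+1] − C/k`, and the resulting bracketing of any root of `g`. -/
theorem g_sign_evaluations_and_root_bracketing
    (n k : ℕ) (hk1 : 1 ≤ k) (hkn : k < n) (β0 : Fin n → ℝ)
    (C : ℝ) (hCpos : 0 < C)
    (g : ℝ → ℝ) (hg : ∀ μ, g μ = (∑ j, min (max (β0 j - μ) 0) (C / k)) - C) :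
    g (kthLargest β0 k) ≤ -C / k ∧ (-C / k : ℝ) < 0 ∧
      C / k ≤ g (kthLargest β0 (k + 1) - C / k) ∧ (0 : ℝ) < C / k ∧
      ∀ μ' : ℝ, g μ' = 0 →
        kthLargest β0 (k + 1) - C / k < μ' ∧ μ' < kthLargest β0 k := by
  have hk0 : (0 : ℝ) < k := by exact_mod_cast hk1
  have hCk : 0 < C / k := div_pos hCpos hk0
  have hkC : k * (C / k) = C := by field_simp
  have hneg : -C / k = -(C / k) := neg_div _ _
  set l := (List.ofFn β0).insertionSort (· ≥ ·) with hl_def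
  have hl : l.Pairwise (· ≥ ·) := List.pairwise_insertionSort _ _
  have hlen : l.length = n := by simp [hl_def]
  have hsum : ∀ f : ℝ → ℝ, ∑ j, f (β0 j) = (l.map f).sum := by
    intro f
    rw [((List.perm_insertionSort (· ≥ ·) (List.ofFn β0)).map f).sum_eq, List.map_ofFn,
      List.sum_ofFn]
    rfl
  have hk : kthLargest β0 k = l[k - 1]'(by omega) :=
    List.getD_eq_getElem _ _ _
  have hk' : kthLargest β0 (k + 1) = l[k]'(by omega) :=
    List.getD_eq_getElem _ _ _
  have hup : g (kthLargest β0 k) ≤ -C / k := by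
    rw [hg, hsum (fun x => min (max (x - kthLargest β0 k) 0) (C / k))]
    have := sum_map_le_of_pairwise_ge l hl (k - 1) (by omega)
      (fun x => min (max (x - kthLargest β0 k) 0) (C / k)) (C / k)
      (fun x => min_le_right _ _) (by
        intro x hx
        rw [← hk] at hx
        exact (min_le_left _ _).trans (max_le (by linarith) le_rfl))
    rw [Nat.cast_sub hk1, Nat.cast_one] at this
    linarith
  have hlow : C / k ≤ g (kthLargest β0 (k + 1) - C / k) := by
    rw [hg, hsum (fun x => min (max (x - (kthLargest β0 (k + 1) - C / k)) 0) (C / k))]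
    have := le_sum_map_of_pairwise_ge l hl k (by omega)
      (fun x => min (max (x - (kthLargest β0 (k + 1) - C / k)) 0) (C / k)) (C / k)
      (fun x => le_min (le_max_right _ _) hCk.le) (by
        intro x hx
        rw [← hk'] at hx
        exact le_min (le_max_of_le_left (by linarith)) le_rfl)
    linarith
  have hanti : Antitone g := by
    intro a b hab
    rw [hg, hg]
    gcongr
  refine ⟨hup, by linarith, hlow, hCk, fun μ' hμ => ⟨?_, ?_⟩⟩
  · by_contra! h
    have := hanti h
    linarith
  · by_contra! h
    have := hanti h
    linarith
end

section
/- Let D = {(x_1, y_1),...,(x_N, y_N)} ⊂ ℝ^p × {−1,+1} be a dataset, let τ ∈ (0,1), λ > 0, let L be a surrogate function of 𝟙(u ≤ 0), and let k be an integer with N − ⌊τN⌋ < k ≤ N. Let A be a natural number satisfying ⌊τ(N + A)⌋ − A = N − k, and set n = N + A and d = p + 1. Construct the single positive instance x^+ = 0 ∈ ℝ^d and the negative instances x_i^- = (−y_i x_i, −y_i) ∈ ℝ^d for i = 1,...,N and x_{N+j}^- = 0 ∈ ℝ^d for j = 1,...,A. Then there exists a hyperplane (w₀, b₀) ∈ ℝ^p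 × ℝ reaching at least k agreements on D (i.e., y_i(⟨w₀, x_i⟩ + b₀) > 0 for at least k indices i) if and only if inf over w ∈ ℝ^d with ‖w‖ ≤ λ of L( ⟨w, x^+⟩ − ⟨w, x^-_{[⌊τn⌋ + 1]}⟩ ) < L(0), where ⟨w, x^-_{[j]}⟩ denotes the j-th largest value among ⟨w, x_1^-⟩,...,⟨w, x_n^-⟩. -/
/-!
With `m = ⌊τ (N + A)⌋ = N + A - k`, the `(m + 1)`-th largest of the `N + A` scores is negative exactly
when at least `k` scores are negative (`kthLargest_neg_iff`). The scores of the padding points are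
`0`, and the score of the `i`-th remaining point under `w = (w₀, b₀)` is `-y i * (⟪w₀, x i⟫ + b₀)`
(`inner_snoc_eq`), so this says that `(w₀, b₀)` reaches at least `k` agreements. As `L u < L 0` holds
exactly for `u > 0`, a value of the objective lies below `L 0` exactly when its `w` encodes such a
hyperplane. The norm constraint is harmless because agreements are invariant under positive scaling
of the hyperplane.
-/

open scoped RealInnerProductSpace

/-- In a list sorted in descending order, the entries from position `m` (0-indexed) on are all
negative as soon as the `m`-th is, and no earlier entry is negative if the `m`-th is not. -/
lemma sorted_neg (l : List ℝ) (hl : l.Pairwise (· ≥ ·)) (m : ℕ) (hm : m < l.length) :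
    l[m] < 0 ↔ l.length - m ≤ l.countP (fun a => decide (a < 0)) := by
  constructor
  · intro h
    have h1 : (l.drop m).countP (fun a => decide (a < 0)) = (l.drop m).length := by
      rw [List.countP_eq_length]
      intro a ha
      obtain ⟨i, hi, rfl⟩ := List.getElem_of_mem ha
      rw [List.getElem_drop]
      rw [List.length_drop] at hi
      rcases Nat.eq_zero_or_pos i with rfl | hpos
      · simpa using h
      · have := List.pairwise_iff_getElem.1 hl m (m + i) hm (by omega) (by omega)
        simpa using lt_of_le_of_lt this h
    calc l.length - m = (l.drop m).length := by simp
      _ = _ := h1.symm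
      _ ≤ _ := (List.drop_sublist m l).countP_le
  · intro h
    by_contra hneg
    have h1 : (l.take (m + 1)).countP (fun a => decide (a < 0)) = 0 := by
      rw [List.countP_eq_zero]
      intro a ha
      obtain ⟨i, hi, rfl⟩ := List.getElem_of_mem ha
      rw [List.getElem_take]
      rw [List.length_take] at hi
      rcases (show i < m ∨ i = m by omega) with hlt | rfl
      · have := List.pairwise_iff_getElem.1 hl i m (by omega) hm hlt
        simpa using (not_lt.1 hneg).trans this
      · simpa using hneg
    have h2 := List.countP_le_length (p := fun a : ℝ => decide (a < 0)) (l := l.drop (m + 1))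
    rw [← List.take_append_drop (m + 1) l, List.countP_append, h1] at h
    simp at h h2
    omega

lemma countP_ofFn_neg {n : ℕ} (v : Fin n → ℝ) :
    (List.ofFn v).countP (fun a => decide (a < 0)) =
      (Finset.univ.filter fun i => v i < 0).card := by
  rw [List.ofFn_eq_map, List.countP_map, List.countP_eq_length_filter]
  rfl

lemma kthLargest_neg_iff {n : ℕ} (v : Fin n → ℝ) (m : ℕ) (hm : m < n) :
    kthLargest v (m + 1) < 0 ↔ n - m ≤ (Finset.univ.filter fun i => v i < 0).card := by
  have hlen : ((List.ofFn v).insertionSort (· ≥ ·)).length = n := by simp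
  have h := sorted_neg _ (List.pairwise_insertionSort (· ≥ ·) (List.ofFn v)) m (hlen.symm ▸ hm)
  rw [(List.perm_insertionSort (· ≥ ·) (List.ofFn v)).countP_eq, countP_ofFn_neg] at h
  rw [kthLargest, Nat.add_sub_cancel, List.getD_eq_getElem _ _ (hlen.symm ▸ hm), h, hlen]

/-- Pairing with `(-y • x, -y)` computes the negated margin of the labeled point `(x, y)` with
respect to the hyperplane whose normal is the first `p` coordinates of `w` and whose offset is the
last one. -/
lemma inner_snoc_eq {p : ℕ} (w z : EuclideanSpace ℝ (Fin (p + 1))) (x : EuclideanSpace ℝ (Fin p))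
    (y : ℝ) (hz : z.ofLp = (Fin.snoc (fun j : Fin p => -y * x j) (-y) : Fin (p + 1) → ℝ)) :
    ⟪w, z⟫ = -(y * (⟪(WithLp.toLp 2 fun j : Fin p => w j.castSucc), x⟫ + w (Fin.last p))) := by
  simp only [PiLp.inner_apply, hz, Fin.sum_univ_castSucc, Fin.snoc_castSucc, Fin.snoc_last,
    RCLike.inner_apply, conj_trivial]
  rw [mul_add, neg_add, Finset.mul_sum, ← Finset.sum_neg_distrib]
  congr 1
  · exact Finset.sum_congr rfl fun j _ => by ring
  · ring

/-- Padding with zeros does not change the number of negative entries. -/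
lemma card_neg_add {N A : ℕ} (v : Fin (N + A) → ℝ) (hv : ∀ j : Fin A, v (Fin.natAdd N j) = 0) :
    (Finset.univ.filter fun i => v i < 0).card =
      (Finset.univ.filter fun i : Fin N => v (Fin.castAdd A i) < 0).card := by
  simp only [Finset.card_filter, Fin.sum_univ_add, hv, lt_irrefl, if_false, Finset.sum_const_zero,
    add_zero]

open Classical in
/-- Case 1 reduction: with the constructed dataset (one positive instance
`x⁺ = 0 ∈ ℝ^{p+1}`, negatives `x_i⁻ = (−y_i x_i, −y_i)` for `i ≤ N` and `x_{N+j}⁻ = 0`),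
there is a hyperplane reaching at least `k` agreements on `D` iff the infimum of the
surrogate ranking objective over `‖w‖ ≤ λ` is below `L(0)`. -/
theorem dpmap_reduction_case1
    (N p : ℕ) (x : Fin N → EuclideanSpace ℝ (Fin p)) (y : Fin N → ℝ)
    (hy : ∀ i, y i = 1 ∨ y i = -1)
    (τ lam : ℝ) (hτ0 : 0 < τ) (hτ1 : τ < 1) (hlam : 0 < lam)
    (L : ℝ → ℝ) (hL_cont : Continuous L) (hL_anti : Antitone L)
    (hL_nonpos : ∀ u ≤ 0, L 0 ≤ L u) (hL0 : 1 ≤ L 0)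
    (hL_pos : ∀ u > 0, 0 ≤ L u ∧ L u < L 0)
    (hL_lim : Filter.Tendsto L Filter.atTop (nhds 0))
    (k : ℕ) (hk1 : (N : ℤ) - ⌊τ * (N : ℝ)⌋ < (k : ℤ)) (hk2 : k ≤ N)
    (A : ℕ) (hA : ⌊τ * ((N : ℝ) + (A : ℝ))⌋ - (A : ℤ) = (N : ℤ) - (k : ℤ))
    (xneg : Fin (N + A) → EuclideanSpace ℝ (Fin (p + 1)))
    (hxneg : ∀ i : Fin (N + A), xneg i =
      if h : (i : ℕ) < N then
        (Fin.snoc (fun j : Fin p => -(y ⟨i, h⟩) * x ⟨i, h⟩ j) (-(y ⟨i, h⟩)) :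
          Fin (p + 1) → ℝ)
      else 0) :
    (∃ (w₀ : EuclideanSpace ℝ (Fin p)) (b₀ : ℝ),
        k ≤ (Finset.univ.filter fun i : Fin N => 0 < y i * (⟪w₀, x i⟫ + b₀)).card) ↔
      sInf {v : ℝ | ∃ w : EuclideanSpace ℝ (Fin (p + 1)), ‖w‖ ≤ lam ∧
          v = L (⟪w, (0 : EuclideanSpace ℝ (Fin (p + 1)))⟫ -
            kthLargest (fun j => ⟪w, xneg j⟫)
              ((⌊τ * (((N : ℝ) + (A : ℝ)))⌋).toNat + 1))} < L 0 := by
  have hfl : ⌊τ * (N : ℝ)⌋ ≤ (N : ℤ) := by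
    have h : τ * (N : ℝ) ≤ N := by nlinarith [Nat.cast_nonneg (α := ℝ) N]
    exact_mod_cast (Int.floor_le (τ * (N : ℝ))).trans h
  have hkpos : 0 < k := by omega
  have hm : (⌊τ * ((N : ℝ) + (A : ℝ))⌋).toNat = N + A - k := by omega
  have hkey : ∀ w : EuclideanSpace ℝ (Fin (p + 1)),
      kthLargest (fun j => ⟪w, xneg j⟫) (N + A - k + 1) < 0 ↔
        k ≤ (Finset.univ.filter fun i : Fin N =>
          0 < y i * (⟪(WithLp.toLp 2 fun j : Fin p => w j.castSucc), x i⟫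
            + w (Fin.last p))).card := by
    intro w
    have hpad : ∀ j : Fin A, ⟪w, xneg (Fin.natAdd N j)⟫ = 0 := by
      intro j
      have h0 : xneg (Fin.natAdd N j) = 0 := by
        ext l
        simp [hxneg]
      rw [h0, inner_zero_right]
    have hpt : ∀ i : Fin N, ⟪w, xneg (Fin.castAdd A i)⟫ =
        -(y i * (⟪(WithLp.toLp 2 fun j : Fin p => w j.castSucc), x i⟫ + w (Fin.last p))) := by
      intro i
      apply inner_snoc_eq
      rw [hxneg]
      simp
    rw [kthLargest_neg_iff _ _ (by omega), card_neg_add _ hpad,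
      show N + A - (N + A - k) = k by omega]
    simp only [hpt, neg_lt_zero]
  have hL_nonneg : ∀ u, 0 ≤ L u := by
    intro u
    rcases le_or_gt u 0 with hu | hu
    · linarith [hL_nonpos u hu]
    · exact (hL_pos u hu).1
  simp only [hm, inner_zero_right, zero_sub]
  constructor
  · rintro ⟨w₀, b₀, hcard⟩
    set w : EuclideanSpace ℝ (Fin (p + 1)) :=
      WithLp.toLp 2 (Fin.snoc (fun j : Fin p => w₀ j) b₀ : Fin (p + 1) → ℝ) with hw
    -- Rescaling by `c` brings the hyperplane into the ball of radius `lam`;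
    -- the `+ 1` avoids dividing by zero when `w = 0`.
    set c : ℝ := lam / (‖w‖ + 1) with hc
    have hcpos : 0 < c := by positivity
    have hnorm : ‖c • w‖ ≤ lam := by
      rw [norm_smul, Real.norm_of_nonneg hcpos.le, hc, div_mul_eq_mul_div, div_le_iff₀ (by positivity)]
      nlinarith [norm_nonneg w]
    have hinit : (WithLp.toLp 2 fun j : Fin p => (c • w) j.castSucc) = c • w₀ := by
      ext j
      simp [hw]
    have hlast : (c • w) (Fin.last p) = c * b₀ := by simp [hw]
    have hneg : kthLargest (fun j => ⟪c • w, xneg j⟫) (N + A - k + 1) < 0 := by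
      rw [hkey, hinit, hlast]
      refine hcard.trans (Finset.card_le_card ?_)
      intro i hi
      simp only [Finset.mem_filter, Finset.mem_univ, true_and] at hi ⊢
      have h := mul_pos hcpos hi
      rw [real_inner_smul_left]
      linarith
    refine lt_of_le_of_lt (csInf_le ⟨0, ?_⟩ ⟨c • w, hnorm, rfl⟩) (hL_pos _ (neg_pos.2 hneg)).2
    rintro _ ⟨_, -, rfl⟩
    exact hL_nonneg _
  · intro h
    obtain ⟨_, ⟨w, -, rfl⟩, hlt⟩ :=
      exists_lt_of_csInf_lt (by exact ⟨_, 0, by simpa using hlam.le, rfl⟩) h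
    refine ⟨_, _, (hkey w).1 ?_⟩
    by_contra hge
    exact absurd hlt (not_lt.2 (hL_nonpos _ (by linarith)))
end
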